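/- arXiv:1709.02283 — 2 statements merged into one kernel-verified Lean document; each statement's English description precedes it below -/
import Mathlib

section
/- The inequality p_{n+1} - p_n < 2 * p_n / n holds for infinitely many positive integers n, where p_n denotes the n-th prime number. -/
/-- `nthPrime n` is the `n`-th prime number with 1-based indexing:
`nthPrime 1 = 2`, `nthPrime 2 = 3`, `nthPrime 3 = 5`, ... -/
noncomputable def nthPrime (n : ℕ) : ℕ := Nat.nth Nat.Prime (n - 1)

/-!
If the inequality `p (n + 1) - p n < p n * (q (n + 1) - q n + 1) / q n` fails for all large `n`,
then `1 / p (n + 1) ≤ q n / p n - q (n + 1) / p (n + 1)`, which is the hypothesis of Kummer's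
convergence test with weights `q`: the right-hand side telescopes, so `∑ 1 / p n` converges. For
the sequence of primes this contradicts Euler's theorem, and `q n = n` gives the bound
`2 * p n / n`.
-/

open Filter Finset

theorem summable_of_eventually_le_sub {a b : ℕ → ℝ} {c : ℝ} (ha : ∀ᶠ n in atTop, 0 ≤ a n)
    (hb : ∀ᶠ n in atTop, c ≤ b n) (hab : ∀ᶠ n in atTop, a n ≤ b n - b (n + 1)) :
    Summable a := by
  obtain ⟨N, hN⟩ := eventually_atTop.1 (ha.and (hb.and hab))
  rw [← summable_nat_add_iff N]
  refine summable_of_sum_range_le (c := b N - c) (fun k ↦ (hN (k + N) (by lia)).1) fun n ↦ ?_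
  calc ∑ k ∈ range n, a (k + N)
      ≤ ∑ k ∈ range n, (b (k + N) - b (k + 1 + N)) :=
        sum_le_sum fun k _ ↦ by simpa only [add_right_comm] using (hN (k + N) (by lia)).2.2
    _ = b N - b (n + N) := by rw [sum_range_sub' fun k ↦ b (k + N), zero_add]
    _ ≤ b N - c := sub_le_sub_left (hN (n + N) (by lia)).2.1 _

theorem inv_le_div_sub_div_of_le_sub {K : Type*} [Field K] [LinearOrder K] [IsStrictOrderedRing K]
    {x y s t : K} (hx : 0 < x) (hy : 0 < y) (hs : 0 < s)
    (h : x * (t - s + 1) / s ≤ y - x) : y⁻¹ ≤ s / x - t / y := by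
  have hmul : x * (t + 1) ≤ s * y := by
    rw [div_le_iff₀ hs] at h
    linarith
  have hdiv : (t + 1) / y ≤ s / x := by
    rw [div_le_div_iff₀ hy hx]
    linarith
  rw [add_div, one_div] at hdiv
  linarith

theorem frequently_sub_lt_of_not_summable_inv {p q : ℕ → ℝ} (hp : ∀ᶠ n in atTop, 0 < p n)
    (hq : ∀ᶠ n in atTop, 0 < q n) (hsum : ¬ Summable fun n ↦ (p n)⁻¹) :
    ∃ᶠ n in atTop, p (n + 1) - p n < p n * (q (n + 1) - q n + 1) / q n := by
  by_contra! hgap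
  refine hsum ?_
  have hp' : ∀ᶠ n in atTop, 0 < p (n + 1) := (tendsto_add_atTop_nat 1).eventually hp
  rw [← summable_nat_add_iff 1]
  refine summable_of_eventually_le_sub (b := fun n ↦ q n / p n) (c := 0) ?_ ?_ ?_
  · filter_upwards [hp'] with n hpn using (inv_pos.2 hpn).le
  · filter_upwards [hp, hq] with n hpn hqn using (div_pos hqn hpn).le
  · filter_upwards [hp, hp', hq, hgap] with n hpn hpn' hqn hgapn
      using inv_le_div_sub_div_of_le_sub hpn hpn' hqn hgapn

theorem prime_nthPrime (n : ℕ) : (nthPrime n).Prime :=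
  Nat.prime_nth_prime (n - 1)

theorem not_summable_inv_nthPrime : ¬ Summable fun n ↦ (nthPrime n : ℝ)⁻¹ := by
  -- The shift skips the junk value `nthPrime 0 = nthPrime 1`.
  rw [← summable_nat_add_iff 1]
  intro hsum
  refine not_summable_one_div_on_primes ?_
  rw [← (Nat.nth_injective Nat.infinite_setOfPred_prime).summable_iff]
  · simpa [nthPrime, Function.comp_def, Set.indicator] using hsum
  · intro m hm
    rw [Nat.range_nth_of_infinite Nat.infinite_setOfPred_prime] at hm
    exact Set.indicator_of_notMem hm _

theorem prime_gap_two_over_n_general {q : ℕ → ℝ} (hq : ∀ᶠ n in atTop, 0 < q n) :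
    ∃ᶠ n in atTop,
      (nthPrime (n + 1) : ℝ) - nthPrime n < nthPrime n * (q (n + 1) - q n + 1) / q n :=
  frequently_sub_lt_of_not_summable_inv
    (Eventually.of_forall fun n ↦ Nat.cast_pos.2 (prime_nthPrime n).pos) hq
    not_summable_inv_nthPrime

/-- The inequality `p (n+1) - p n < 2 * p n / n` holds for infinitely many positive
integers `n`. -/
theorem prime_gap_two_over_n :
    ∃ᶠ n in Filter.atTop, 1 ≤ n ∧
      (nthPrime (n + 1) : ℝ) - (nthPrime n : ℝ) < 2 * (nthPrime n : ℝ) / (n : ℝ) := by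
  have hpos : ∀ᶠ n : ℕ in atTop, (0 : ℝ) < n := by
    filter_upwards [eventually_ge_atTop 1] with n hn using Nat.cast_pos.2 hn
  refine ((prime_gap_two_over_n_general hpos).and_eventually (eventually_ge_atTop 1)).mono ?_
  rintro n ⟨hgap, hn⟩
  refine ⟨hn, hgap.trans_eq ?_⟩
  push_cast
  ring
end

section
/- For every real number x with 0 ≤ x < 1, the inequality p_{n+1}^x - p_n^x < 1/(p_{n+1} * p_n)^{1-x} + (p_{n+1} - p_n) / p_n^{1-x} holds for infinitely many values of n, where p_n denotes the n-th prime number. -/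
theorem nthPrime_pos (n : ℕ) : 0 < nthPrime n :=
  (Nat.prime_nth_prime (n - 1)).pos

theorem nthPrime_monotone : Monotone nthPrime :=
  (Nat.nth_monotone Nat.infinite_setOfPred_prime).comp fun _ _ h ↦ Nat.sub_le_sub_right h 1

theorem rpow_sub_rpow_le_sub_div_rpow {x a b : ℝ} (hx : x ≤ 1) (ha : 0 < a) (hab : a ≤ b) :
    b ^ x - a ^ x ≤ (b - a) / a ^ (1 - x) := by
  have hb : 0 < b := ha.trans_le hab
  have rpow_eq {c : ℝ} (hc : 0 < c) : c ^ x = c * c ^ (x - 1) := by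
    rw [Real.rpow_sub_one hc.ne', mul_div_cancel₀ _ hc.ne']
  have antitone : b ^ (x - 1) ≤ a ^ (x - 1) :=
    Real.rpow_le_rpow_of_nonpos ha hab (sub_nonpos.mpr hx)
  calc
    b ^ x - a ^ x = b * b ^ (x - 1) - a * a ^ (x - 1) := by rw [rpow_eq hb, rpow_eq ha]
    _ ≤ b * a ^ (x - 1) - a * a ^ (x - 1) := by gcongr
    _ = (b - a) / a ^ (1 - x) := by
      rw [← sub_mul, ← neg_sub 1 x, Real.rpow_neg ha.le, div_eq_mul_inv]

theorem prime_power_gap_bound_general {x a b : ℝ} (hx : x ≤ 1) (ha : 0 < a) (hab : a ≤ b) :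
    b ^ x - a ^ x < 1 / (b * a) ^ (1 - x) + (b - a) / a ^ (1 - x) := by
  have hb : 0 < b := ha.trans_le hab
  exact lt_add_of_pos_of_le (by positivity) (rpow_sub_rpow_le_sub_div_rpow hx ha hab)

/-- For every real `x` with `0 ≤ x < 1`, the inequality
`p (n+1) ^ x - p n ^ x < 1 / (p (n+1) * p n) ^ (1 - x) + (p (n+1) - p n) / p n ^ (1 - x)`
holds for infinitely many positive integers `n`. -/
theorem prime_power_gap_bound (x : ℝ) (hx0 : 0 ≤ x) (hx1 : x < 1) :
    ∃ᶠ n in Filter.atTop, 1 ≤ n ∧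
      (nthPrime (n + 1) : ℝ) ^ x - (nthPrime n : ℝ) ^ x
        < 1 / ((nthPrime (n + 1) : ℝ) * (nthPrime n : ℝ)) ^ (1 - x)
          + ((nthPrime (n + 1) : ℝ) - (nthPrime n : ℝ)) / (nthPrime n : ℝ) ^ (1 - x) :=
  (Filter.eventually_ge_atTop 1).frequently.mono fun n hn ↦
    ⟨hn, prime_power_gap_bound_general hx1.le (mod_cast nthPrime_pos n)
      (mod_cast nthPrime_monotone n.le_succ)⟩
end
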